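/- Let X be a set, let n ≥ 1 and K ≥ 1 be positive integers, let B ≥ 1 and η > 0 be real numbers, and let ρ : ℕ₊ × X → [0,∞) be a family of nonnegative functions satisfying the submultiplicativity property ρ(k·l, x) ≥ ρ(k, x)^l / (l^n · B^{l-1}) for all positive integers k, l and all x ∈ X. Assume that for every x ∈ X there exists a positive integer m ≤ K with ρ(m, x) ≥ η. Then, setting D = K! (the factorial of K), one has ρ(D, x) ≥ min{1, η^D} / (D^n · B^{D-1}) > 0 for every x ∈ X. -/

import Mathlib

/-!
Write `D = K!`. Given `x`, choose `m ≤ K` with `ρ m x ≥ η`. Then `m ∣ D`, say `D = m * l` with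
`1 ≤ l ≤ D`, and the power inequality gives `ρ D x ≥ η ^ l / (l ^ n * B ^ (l - 1))`. Replacing `l`
by `D` only enlarges the denominator because `B ≥ 1`, while `η ^ l ≥ min 1 (η ^ D)`, so the
bound no longer depends on `m`.
-/

/-- Arithmetic mechanism behind the uniform lower bound for Bergman kernels:
if `ρ(kl, x) ≥ ρ(k,x)^l / (l^n B^{l-1})` and every point has some `m ≤ K` with
`ρ(m, x) ≥ η`, then with `D = K!` one has
`ρ(D, x) ≥ min{1, η^D} / (D^n B^{D-1}) > 0` for every `x`. -/
theorem stmt_6 {X : Type*} (n K : ℕ) (hn : 1 ≤ n) (hK : 1 ≤ K)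
    (B η : ℝ) (hB : 1 ≤ B) (hη : 0 < η)
    (ρ : ℕ+ → X → ℝ) (hρ_nonneg : ∀ (k : ℕ+) (x : X), 0 ≤ ρ k x)
    (hsubmult : ∀ (k l : ℕ+) (x : X),
      ρ (k * l) x ≥ (ρ k x) ^ (l : ℕ) / ((l : ℝ) ^ n * B ^ ((l : ℕ) - 1)))
    (hpoint : ∀ x : X, ∃ m : ℕ+, (m : ℕ) ≤ K ∧ ρ m x ≥ η) :
    ∀ x : X,
      (0 : ℝ) < min 1 (η ^ K.factorial) /
          ((K.factorial : ℝ) ^ n * B ^ (K.factorial - 1)) ∧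
      ρ (⟨K.factorial, K.factorial_pos⟩ : ℕ+) x ≥
        min 1 (η ^ K.factorial) /
          ((K.factorial : ℝ) ^ n * B ^ (K.factorial - 1)) := by
  intro x
  have hB0 : 0 < B := by linarith
  have hD : 0 < K.factorial := K.factorial_pos
  refine ⟨by positivity, ?_⟩
  obtain ⟨m, hmK, hm⟩ := hpoint x
  obtain ⟨l, hl⟩ := Nat.dvd_factorial m.pos hmK
  have hl0 : 0 < l := Nat.pos_of_ne_zero fun h => by simp [h] at hl; omega
  have hlD : l ≤ K.factorial := Nat.le_of_dvd hD ⟨m, by rw [hl, mul_comm]⟩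
  lift l to ℕ+ using hl0
  have hfac : (⟨K.factorial, K.factorial_pos⟩ : ℕ+) = m * l := PNat.eq hl
  have hsub := hsubmult m l x
  rw [← hfac] at hsub
  refine le_trans ?_ hsub
  have hmin : min 1 (η ^ K.factorial) ≤ η ^ (l : ℕ) := by
    rcases le_total η 1 with h | h
    · exact (min_le_right _ _).trans (pow_le_pow_of_le_one hη.le h hlD)
    · exact (min_le_left _ _).trans (one_le_pow₀ h)
  have hlR : (0 : ℝ) < l := by exact_mod_cast l.pos
  have hpow : η ^ (l : ℕ) ≤ ρ m x ^ (l : ℕ) := pow_le_pow_left₀ hη.le hm l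
  have hden : (l : ℝ) ^ n * B ^ ((l : ℕ) - 1) ≤
      (K.factorial : ℝ) ^ n * B ^ (K.factorial - 1) := by
    gcongr
  exact div_le_div₀ (pow_nonneg (hρ_nonneg m x) l) (hmin.trans hpow) (by positivity) hden
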